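/- arXiv:2410.10115 — 6 statements merged into one kernel-verified Lean document; each statement's English description precedes it below -/
import Mathlib

section
/- For every t > 0 and all x, y ∈ [0,1], the Dirichlet heat kernel is dominated by the Gaussian heat kernel on ℝ: G_t(x,y) ≤ (4πt)^{-1/2} · exp(−(x−y)²/(4t)). -/
/-!
The proof is the method of images. Writing `2 sin(nπx) sin(nπy) = cos(nπ(x-y)) - cos(nπ(x+y))`
expresses `G t x y` through two theta series, and Jacobi's functional equation (Poisson summation,
available in Mathlib as `HurwitzZeta.evenKernel_functional_equation`) turns it into
`(4πt)^{-1/2} ∑_{n ∈ ℤ} (p (2n + x - y) - p (2n + x + y))` with `p z = exp (-z² / (4t))`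
(`G_eq_images`).

It remains to see that the terms `p (2n + x - y)` with `n ≠ 0` are absorbed by the negative terms.
For `x, y ∈ [0,1]` and `n ≥ 0` one has `0 ≤ 2n + x + y ≤ 2(n+1) + x - y` and
`0 ≤ 2(n+1) - x - y ≤ 2(n+1) - x + y`, so the term of index `n + 1` is absorbed by the image of
index `n`, and the term of index `-(n+1)` by the image of index `-(n+1)`
(`tsum_le_add_tsum_of_shift`).
-/

open Real MeasureTheory Set

/-- The Dirichlet heat kernel on `[0,1]`:
`G t x y = ∑_{n=1}^∞ 2 e^{−π²n²t} sin(nπx) sin(nπy)` for `t > 0`, and `0` for `t ≤ 0`. -/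
noncomputable def G (t x y : ℝ) : ℝ :=
  if 0 < t then
    ∑' n : ℕ, 2 * Real.exp (-(Real.pi ^ 2) * ((n : ℝ) + 1) ^ 2 * t)
      * Real.sin (((n : ℝ) + 1) * Real.pi * x) * Real.sin (((n : ℝ) + 1) * Real.pi * y)
  else 0

/-- If `f (n + 1) ≤ g n` and `f (-(n + 1)) ≤ g (-(n + 1))` for `n ≥ 0`, then `g` dominates all the
terms of `f` except the one at `0`, each term of `g` being used exactly once. -/
lemma tsum_le_add_tsum_of_shift {f g : ℤ → ℝ} {a b : ℝ} (hf : HasSum f a) (hg : HasSum g b)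
    (hpos : ∀ n : ℕ, f (n + 1) ≤ g n) (hneg : ∀ n : ℕ, f (-(n + 1)) ≤ g (-(n + 1))) :
    a ≤ f 0 + b := by
  have hf₁ : Summable fun n : ℕ ↦ f n := hf.summable.comp_injective Nat.cast_injective
  have hf₂ : Summable fun n : ℕ ↦ f (-(n + 1)) :=
    hf.summable.comp_injective fun m n h ↦ by simpa using h
  have hg₁ : Summable fun n : ℕ ↦ g n := hg.summable.comp_injective Nat.cast_injective
  have hg₂ : Summable fun n : ℕ ↦ g (-(n + 1)) :=
    hg.summable.comp_injective fun m n h ↦ by simpa using h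
  have hf₃ : Summable fun n : ℕ ↦ f (n + 1) := by
    simpa using (summable_nat_add_iff 1).2 hf₁
  have h1 : ∑' n : ℕ, f (n + 1) ≤ ∑' n : ℕ, g n := hf₃.tsum_le_tsum hpos hg₁
  have h2 : ∑' n : ℕ, f (-(n + 1)) ≤ ∑' n : ℕ, g (-(n + 1)) := hf₂.tsum_le_tsum hneg hg₂
  have h3 : ∑' n : ℕ, f n = f 0 + ∑' n : ℕ, f (n + 1) := by
    simpa using hf₁.tsum_eq_zero_add
  rw [← hf.tsum_eq, ← hg.tsum_eq, tsum_of_nat_of_neg_add_one hf₁ hf₂,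
    tsum_of_nat_of_neg_add_one hg₁ hg₂, h3]
  linarith

/-- The theta series at time `1 / (π t)` is a sum of Gaussians centred at the even integers. -/
lemma hasSum_gaussian_images (c : ℝ) {t : ℝ} (ht : 0 < t) :
    HasSum (fun n : ℤ ↦ Real.exp (-(2 * n + c) ^ 2 / (4 * t)))
      (HurwitzZeta.evenKernel ((c / 2 : ℝ) : UnitAddCircle) (1 / (π * t))) := by
  have hu : 0 < 1 / (π * t) := by positivity
  refine (HurwitzZeta.hasSum_int_evenKernel (c / 2) hu).congr_fun fun n ↦ ?_
  congr 1
  field_simp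
  ring

lemma G_eq_cosKernel {t : ℝ} (ht : 0 < t) (x y : ℝ) :
    G t x y = 1 / 2 * (HurwitzZeta.cosKernel (((x - y) / 2 : ℝ) : UnitAddCircle) (π * t)
      - HurwitzZeta.cosKernel (((x + y) / 2 : ℝ) : UnitAddCircle) (π * t)) := by
  have hu : 0 < π * t := by positivity
  have h := ((HurwitzZeta.hasSum_nat_cosKernel₀ ((x - y) / 2) hu).sub
    (HurwitzZeta.hasSum_nat_cosKernel₀ ((x + y) / 2) hu)).mul_left (1 / 2)
  rw [sub_sub_sub_cancel_right] at h
  rw [G, if_pos ht, ← h.tsum_eq]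
  refine tsum_congr fun n ↦ ?_
  have e1 : 2 * π * ((x - y) / 2) * ((n : ℝ) + 1)
      = ((n : ℝ) + 1) * π * x - ((n : ℝ) + 1) * π * y := by ring
  have e2 : 2 * π * ((x + y) / 2) * ((n : ℝ) + 1)
      = ((n : ℝ) + 1) * π * x + ((n : ℝ) + 1) * π * y := by ring
  have e3 : -π * ((n : ℝ) + 1) ^ 2 * (π * t) = -(π ^ 2) * ((n : ℝ) + 1) ^ 2 * t := by ring
  rw [e1, e2, e3, Real.cos_sub, Real.cos_add]
  ring

lemma half_cosKernel_eq (a : UnitAddCircle) {t : ℝ} (ht : 0 < t) :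
    1 / 2 * HurwitzZeta.cosKernel a (π * t)
      = (4 * π * t) ^ (-(1 / 2 : ℝ)) * HurwitzZeta.evenKernel a (1 / (π * t)) := by
  have hu : 0 < π * t := by positivity
  have h4 : (4 : ℝ) ^ (1 / 2 : ℝ) = 2 := by
    rw [← Real.sqrt_eq_rpow, show (4 : ℝ) = 2 ^ 2 by norm_num]
    exact Real.sqrt_sq (by norm_num)
  have hne : (π * t) ^ (1 / 2 : ℝ) ≠ 0 := (Real.rpow_pos_of_pos hu _).ne'
  rw [HurwitzZeta.evenKernel_functional_equation, one_div_one_div, mul_assoc 4 π t,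
    Real.rpow_neg (by positivity), Real.mul_rpow (by norm_num) hu.le, h4,
    Real.div_rpow zero_le_one hu.le, Real.one_rpow]
  field_simp

/-- Method of images: each `evenKernel` is a sum of Gaussians by `hasSum_gaussian_images`. -/
lemma G_eq_images {t : ℝ} (ht : 0 < t) (x y : ℝ) :
    G t x y = (4 * π * t) ^ (-(1 / 2 : ℝ)) *
      (HurwitzZeta.evenKernel (((x - y) / 2 : ℝ) : UnitAddCircle) (1 / (π * t))
        - HurwitzZeta.evenKernel (((x + y) / 2 : ℝ) : UnitAddCircle) (1 / (π * t))) := by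
  rw [G_eq_cosKernel ht, mul_sub, half_cosKernel_eq _ ht, half_cosKernel_eq _ ht, mul_sub]

/-- The Dirichlet heat kernel is dominated by the Gaussian heat kernel on `ℝ`. -/
theorem dirichlet_kernel_le_gaussian (t x y : ℝ) (ht : 0 < t)
    (hx : x ∈ Set.Icc (0 : ℝ) 1) (hy : y ∈ Set.Icc (0 : ℝ) 1) :
    G t x y ≤ (4 * Real.pi * t) ^ (-(1 / 2 : ℝ)) * Real.exp (-(x - y) ^ 2 / (4 * t)) := by
  obtain ⟨hx0, hx1⟩ := hx
  obtain ⟨hy0, hy1⟩ := hy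
  have key := tsum_le_add_tsum_of_shift (hasSum_gaussian_images (x - y) ht)
    (hasSum_gaussian_images (x + y) ht)
    (fun n ↦ by
      have hn : (0 : ℝ) ≤ n := n.cast_nonneg
      push_cast
      gcongr 1
      gcongr ?_ / _
      apply neg_le_neg
      exact pow_le_pow_left₀ (by linarith) (by linarith) 2)
    (fun n ↦ by
      have hn : (0 : ℝ) ≤ n := n.cast_nonneg
      push_cast
      gcongr 1
      gcongr ?_ / _
      apply neg_le_neg
      -- Both bases are nonpositive, so the squares are compared after a change of sign.
      rw [sq_le_sq, abs_of_nonpos (by linarith), abs_of_nonpos (by linarith)]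
      linarith)
  simp only [Int.cast_zero, mul_zero, zero_add] at key
  rw [G_eq_images ht]
  gcongr
  linarith
end

section
/- For every p > 1 there exists a constant C > 0 (depending only on p) such that for every T > 0, every measurable nonnegative function v : [0,T] × [0,1] → ℝ, every t ∈ [0,T] and every x ∈ [0,1], one has ∫₀ᵗ ∫₀¹ G_{t−s}(x,y)² v(s,y) dy ds ≤ C ∫₀ᵗ (t−s)^{1/(2p) − 1} (∫₀¹ v(s,y)^q dy)^{1/q} ds, where q = p/(p−1) is the conjugate exponent of p (the inequality is understood in [0,∞]). -/
/-!
For `τ > 0` the kernel satisfies two elementary bounds: `|G τ x y| ≤ τ ^ (-1/2)` uniformly in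
`x, y`, and `∫₀¹ G τ x y ^ 2 dy ≤ τ ^ (-1/2)`. Both reduce to
`∑_{n ≥ 1} exp (-π² n² τ) ≤ (1/2) τ ^ (-1/2)`, a comparison with a Gaussian integral; the second
one uses in addition the orthogonality of the functions `sin (nπy)` on `[0,1]` for the partial sums
of the series, and Fatou's lemma. Interpolating,
`∫₀¹ |G τ x y| ^ (2p) dy ≤ τ ^ (-(p-1)) * τ ^ (-1/2) = τ ^ (1/2 - p)`,
and Hölder's inequality in `y` with exponents `p, q` gives the theorem, with `C = 1`, already for
the integrands at each fixed `s`.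
-/

open Real MeasureTheory Set

/-- Partial sums of the theta-type series, bounded by a Gaussian integral over `(0, ∞)`. -/
lemma sum_exp_le {τ : ℝ} (hτ : 0 < τ) (N : ℕ) :
    ∑ n ∈ Finset.range N, Real.exp (-(π ^ 2) * ((n : ℝ) + 1) ^ 2 * τ) ≤ τ ^ (-(1 / 2) : ℝ) / 2 := by
  have hb : 0 < π ^ 2 * τ := by positivity
  have hanti : AntitoneOn (fun u : ℝ => Real.exp (-(π ^ 2 * τ) * u ^ 2))
      (Icc (0 : ℝ) (0 + (N : ℝ))) := by
    intro a ha b hb' hab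
    have : a ^ 2 ≤ b ^ 2 := pow_le_pow_left₀ ha.1 hab 2
    apply Real.exp_le_exp.2
    nlinarith
  have h1 := hanti.sum_le_integral
  have h2 : ∫ u in (0 : ℝ)..(0 + (N : ℝ)), Real.exp (-(π ^ 2 * τ) * u ^ 2)
      ≤ ∫ u in Ioi (0 : ℝ), Real.exp (-(π ^ 2 * τ) * u ^ 2) := by
    rw [intervalIntegral.integral_of_le (by positivity)]
    exact setIntegral_mono_set (integrable_exp_neg_mul_sq hb).integrableOn
      (Filter.Eventually.of_forall fun u => (Real.exp_pos _).le)
      (Ioc_subset_Ioi_self.eventuallyLE)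
  rw [integral_gaussian_Ioi] at h2
  have h3 : √(π / (π ^ 2 * τ)) ≤ τ ^ (-(1 / 2) : ℝ) := by
    rw [Real.rpow_neg hτ.le, ← Real.sqrt_eq_rpow, ← Real.sqrt_inv]
    apply Real.sqrt_le_sqrt
    have : π / (π ^ 2 * τ) = π⁻¹ * τ⁻¹ := by field_simp
    rw [this]
    have h4 : π⁻¹ ≤ 1 := inv_le_one_of_one_le₀ (by linarith [Real.pi_gt_three])
    have : 0 ≤ τ⁻¹ := by positivity
    nlinarith
  calc ∑ n ∈ Finset.range N, Real.exp (-(π ^ 2) * ((n : ℝ) + 1) ^ 2 * τ)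
      = ∑ n ∈ Finset.range N, Real.exp (-(π ^ 2 * τ) * (0 + ((n + 1 : ℕ) : ℝ)) ^ 2) := by
        refine Finset.sum_congr rfl fun n _ => ?_
        congr 1; push_cast; ring
    _ ≤ _ := h1.trans (h2.trans (by linarith))

/-- The `n`-th term of the series defining `G τ x y`. -/
noncomputable def heatTerm (τ x y : ℝ) (n : ℕ) : ℝ :=
  2 * Real.exp (-(π ^ 2) * ((n : ℝ) + 1) ^ 2 * τ)
    * Real.sin (((n : ℝ) + 1) * π * x) * Real.sin (((n : ℝ) + 1) * π * y)

lemma abs_term_le (τ x y : ℝ) (n : ℕ) :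
    |heatTerm τ x y n| ≤ 2 * Real.exp (-(π ^ 2) * ((n : ℝ) + 1) ^ 2 * τ) := by
  unfold heatTerm
  rw [abs_mul, abs_mul, abs_of_pos (by positivity : 0 <
    2 * Real.exp (-(π ^ 2) * ((n : ℝ) + 1) ^ 2 * τ)), mul_assoc]
  exact mul_le_of_le_one_right (by positivity)
    (mul_le_one₀ (Real.abs_sin_le_one _) (abs_nonneg _) (Real.abs_sin_le_one _))

lemma summable_majorant {τ : ℝ} (hτ : 0 < τ) :
    Summable fun n : ℕ => 2 * Real.exp (-(π ^ 2) * ((n : ℝ) + 1) ^ 2 * τ) :=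
  (summable_of_sum_range_le (fun _ => (Real.exp_pos _).le) (sum_exp_le hτ)).mul_left 2

lemma hasSum_G {τ : ℝ} (hτ : 0 < τ) (x y : ℝ) : HasSum (heatTerm τ x y) (G τ x y) := by
  have : Summable (heatTerm τ x y) :=
    Summable.of_norm_bounded (summable_majorant hτ) fun n => abs_term_le τ x y n
  simpa only [G, if_pos hτ, heatTerm] using this.hasSum

lemma abs_G_le {τ : ℝ} (hτ : 0 < τ) (x y : ℝ) : |G τ x y| ≤ τ ^ (-(1 / 2) : ℝ) := by
  refine le_of_tendsto (hasSum_G hτ x y).tendsto_sum_nat.abs (Filter.Eventually.of_forall ?_)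
  intro N
  calc |∑ n ∈ Finset.range N, heatTerm τ x y n| ≤ ∑ n ∈ Finset.range N, |heatTerm τ x y n| :=
        Finset.abs_sum_le_sum_abs _ _
    _ ≤ ∑ n ∈ Finset.range N, 2 * Real.exp (-(π ^ 2) * ((n : ℝ) + 1) ^ 2 * τ) :=
        Finset.sum_le_sum fun n _ => abs_term_le τ x y n
    _ ≤ τ ^ (-(1 / 2) : ℝ) := by
        rw [← Finset.mul_sum]; linarith [sum_exp_le hτ N]

lemma continuous_term (τ x : ℝ) (n : ℕ) : Continuous fun y => heatTerm τ x y n := by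
  unfold heatTerm; fun_prop

lemma measurable_G {τ : ℝ} (hτ : 0 < τ) (x : ℝ) : Measurable fun y => G τ x y := by
  refine measurable_of_tendsto_metrizable
    (f := fun N y => ∑ n ∈ Finset.range N, heatTerm τ x y n) (fun N => ?_) ?_
  · exact (continuous_finsetSum _ fun n _ => continuous_term τ x n).measurable
  · exact tendsto_pi_nhds.2 fun y => (hasSum_G hτ x y).tendsto_sum_nat

lemma integral_cos_int {k : ℤ} (hk : k ≠ 0) : ∫ y in (0 : ℝ)..1, Real.cos ((k * π) * y) = 0 := by
  have hk' : (k : ℝ) * π ≠ 0 := mul_ne_zero (by exact_mod_cast hk) Real.pi_ne_zero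
  rw [intervalIntegral.integral_comp_mul_left (fun u => Real.cos u) hk', integral_cos]
  simp [Real.sin_int_mul_pi]

lemma integral_sin_sin (m n : ℕ) :
    ∫ y in (0 : ℝ)..1, Real.sin (((m : ℝ) + 1) * π * y) * Real.sin (((n : ℝ) + 1) * π * y)
      = if m = n then 1 / 2 else 0 := by
  have hrw : ∀ y : ℝ, Real.sin (((m : ℝ) + 1) * π * y) * Real.sin (((n : ℝ) + 1) * π * y)
      = (Real.cos (((((m : ℤ) - n : ℤ) : ℝ) * π) * y)
        - Real.cos (((((m : ℤ) + n + 2 : ℤ) : ℝ) * π) * y)) / 2 := by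
    intro y
    have e1 : ((((m : ℤ) - n : ℤ) : ℝ) * π) * y
        = ((m : ℝ) + 1) * π * y - ((n : ℝ) + 1) * π * y := by push_cast; ring
    have e2 : ((((m : ℤ) + n + 2 : ℤ) : ℝ) * π) * y
        = ((m : ℝ) + 1) * π * y + ((n : ℝ) + 1) * π * y := by push_cast; ring
    rw [e1, e2, Real.cos_sub, Real.cos_add]; ring
  simp_rw [hrw]
  rw [intervalIntegral.integral_div, intervalIntegral.integral_sub
    (Continuous.intervalIntegrable (by fun_prop) _ _)
    (Continuous.intervalIntegrable (by fun_prop) _ _),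
    integral_cos_int (k := (m : ℤ) + n + 2) (by omega)]
  split_ifs with h
  · subst h; simp
  · rw [integral_cos_int (k := (m : ℤ) - n) (by omega)]; simp

lemma integral_partial_sq_le {τ : ℝ} (hτ : 0 < τ) (x : ℝ) (N : ℕ) :
    ∫ y in (0 : ℝ)..1, (∑ n ∈ Finset.range N, heatTerm τ x y n) ^ 2 ≤ τ ^ (-(1 / 2) : ℝ) := by
  set a : ℕ → ℝ := fun n =>
    2 * Real.exp (-(π ^ 2) * ((n : ℝ) + 1) ^ 2 * τ) * Real.sin (((n : ℝ) + 1) * π * x) with ha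
  have hsq : ∀ y : ℝ, (∑ n ∈ Finset.range N, heatTerm τ x y n) ^ 2
      = ∑ m ∈ Finset.range N, ∑ n ∈ Finset.range N, a m * a n *
        (Real.sin (((m : ℝ) + 1) * π * y) * Real.sin (((n : ℝ) + 1) * π * y)) := by
    intro y
    rw [sq, Finset.sum_mul_sum]
    refine Finset.sum_congr rfl fun m _ => Finset.sum_congr rfl fun n _ => ?_
    simp only [heatTerm, ha]; ring
  simp_rw [hsq]
  rw [intervalIntegral.integral_finsetSum
    (fun m _ => Continuous.intervalIntegrable (by fun_prop) _ _)]
  have hin : ∀ m ∈ Finset.range N, (∫ y in (0 : ℝ)..1, ∑ n ∈ Finset.range N, a m * a n *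
        (Real.sin (((m : ℝ) + 1) * π * y) * Real.sin (((n : ℝ) + 1) * π * y)))
      = a m ^ 2 / 2 := by
    intro m hm
    rw [intervalIntegral.integral_finsetSum
      (fun n _ => Continuous.intervalIntegrable (by fun_prop) _ _)]
    simp_rw [intervalIntegral.integral_const_mul, integral_sin_sin]
    simp only [mul_ite, mul_zero, Finset.sum_ite_eq, hm, if_true]
    ring
  rw [Finset.sum_congr rfl hin]
  have hterm : ∀ m ∈ Finset.range N,
      a m ^ 2 / 2 ≤ 2 * Real.exp (-(π ^ 2) * ((m : ℝ) + 1) ^ 2 * τ) := by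
    intro m _
    simp only [ha]
    set e := Real.exp (-(π ^ 2) * ((m : ℝ) + 1) ^ 2 * τ) with he
    have he0 : 0 < e := Real.exp_pos _
    have he1 : e ≤ 1 := by
      apply Real.exp_le_one_iff.2
      have : 0 ≤ π ^ 2 * ((m : ℝ) + 1) ^ 2 * τ := by positivity
      linarith
    have hs := Real.sin_sq_le_one (((m : ℝ) + 1) * π * x)
    have h2 : e ^ 2 ≤ e := by nlinarith
    have h3 : e ^ 2 * Real.sin (((m : ℝ) + 1) * π * x) ^ 2 ≤ e ^ 2 :=
      mul_le_of_le_one_right (by positivity) hs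
    nlinarith
  calc _ ≤ _ := Finset.sum_le_sum hterm
    _ ≤ _ := by rw [← Finset.mul_sum]; linarith [sum_exp_le hτ N]

lemma lintegral_G_sq_le {τ : ℝ} (hτ : 0 < τ) (x : ℝ) :
    ∫⁻ y in Icc (0 : ℝ) 1, ENNReal.ofReal (G τ x y ^ 2)
      ≤ ENNReal.ofReal (τ ^ (-(1 / 2) : ℝ)) := by
  set P : ℕ → ℝ → ℝ := fun N y => ∑ n ∈ Finset.range N, heatTerm τ x y n with hP
  have hc : ∀ N, Continuous (P N) := fun N =>
    continuous_finsetSum _ fun n _ => continuous_term τ x n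
  have hlim : ∀ y, ENNReal.ofReal (G τ x y ^ 2)
      = Filter.liminf (fun N => ENNReal.ofReal (P N y ^ 2)) Filter.atTop := fun y =>
    (((ENNReal.continuous_ofReal.tendsto _).comp
      ((hasSum_G hτ x y).tendsto_sum_nat.pow 2)).liminf_eq).symm
  simp_rw [hlim]
  refine (lintegral_liminf_le fun N =>
    (ENNReal.continuous_ofReal.comp ((hc N).pow 2)).measurable).trans ?_
  refine Filter.liminf_le_of_frequently_le' (Filter.Frequently.of_forall fun N => ?_)
  change ∫⁻ y in Icc (0 : ℝ) 1, ENNReal.ofReal (P N y ^ 2) ≤ _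
  have hi : Integrable (fun y => P N y ^ 2) (volume.restrict (Icc (0 : ℝ) 1)) :=
    ((hc N).pow 2).continuousOn.integrableOn_Icc
  rw [← ofReal_integral_eq_lintegral_ofReal hi
    (Filter.Eventually.of_forall fun y => sq_nonneg _),
    integral_Icc_eq_integral_Ioc, ← intervalIntegral.integral_of_le zero_le_one]
  exact ENNReal.ofReal_le_ofReal (integral_partial_sq_le hτ x N)

/-- Interpolation between the sup bound and the `L²` bound:
`‖G τ x ·²‖_p ≤ τ ^ (1/(2p) - 1)`. -/
lemma Lp_G_sq_le {p : ℝ} (hp : 1 < p) {τ : ℝ} (hτ : 0 < τ) (x : ℝ) :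
    (∫⁻ y in Icc (0 : ℝ) 1, ENNReal.ofReal (G τ x y ^ 2) ^ p) ^ (1 / p)
      ≤ ENNReal.ofReal (τ ^ (1 / (2 * p) - 1)) := by
  have hp0 : 0 < p := by linarith
  have hsup : ∀ y, G τ x y ^ 2 ≤ τ ^ (-1 : ℝ) := fun y => by
    have h := pow_le_pow_left₀ (abs_nonneg _) (abs_G_le hτ x y) 2
    rw [sq_abs, ← Real.rpow_mul_natCast hτ.le] at h
    norm_num at h ⊢
    exact h
  have hpt : ∀ y, ENNReal.ofReal (G τ x y ^ 2) ^ p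
      ≤ ENNReal.ofReal (τ ^ (-(p - 1))) * ENNReal.ofReal (G τ x y ^ 2) := fun y => by
    rw [ENNReal.ofReal_rpow_of_nonneg (sq_nonneg _) hp0.le,
      ← ENNReal.ofReal_mul (by positivity)]
    apply ENNReal.ofReal_le_ofReal
    have h1 : (G τ x y ^ 2) ^ p = (G τ x y ^ 2) ^ (p - 1) * G τ x y ^ 2 := by
      have := Real.rpow_add_one' (x := G τ x y ^ 2) (y := p - 1) (sq_nonneg _) (by linarith)
      rwa [sub_add_cancel] at this
    have h2 : (G τ x y ^ 2) ^ (p - 1) ≤ (τ ^ (-1 : ℝ)) ^ (p - 1) :=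
      Real.rpow_le_rpow (sq_nonneg _) (hsup y) (by linarith)
    rw [← Real.rpow_mul hτ.le, neg_one_mul] at h2
    rw [h1]
    exact mul_le_mul_of_nonneg_right h2 (sq_nonneg _)
  have hint : ∫⁻ y in Icc (0 : ℝ) 1, ENNReal.ofReal (G τ x y ^ 2) ^ p
      ≤ ENNReal.ofReal (τ ^ (1 / 2 - p)) := by
    refine (lintegral_mono hpt).trans ?_
    rw [lintegral_const_mul' _ _ ENNReal.ofReal_ne_top]
    refine (mul_le_mul_right (lintegral_G_sq_le hτ x) _).trans_eq ?_
    rw [← ENNReal.ofReal_mul (by positivity), ← Real.rpow_add hτ]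
    congr 2; ring
  refine (ENNReal.rpow_le_rpow hint (by positivity)).trans_eq ?_
  rw [ENNReal.ofReal_rpow_of_nonneg (by positivity) (by positivity), ← Real.rpow_mul hτ.le]
  congr 2; field_simp

/-- For every `p > 1` there is a constant `C > 0` depending only on `p` such that for every
`T > 0`, every measurable nonnegative `v`, every `t ∈ [0,T]` and `x ∈ [0,1]`,
`∫₀ᵗ∫₀¹ G_{t−s}(x,y)² v(s,y) dy ds ≤ C ∫₀ᵗ (t−s)^{1/(2p)−1} ‖v(s,·)‖_q ds`, with
`q = p/(p−1)`, the inequality understood in `[0,∞]`. -/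
theorem kernel_square_convolution_bound (p : ℝ) (hp : 1 < p) :
    ∃ C : ℝ, 0 < C ∧ ∀ T : ℝ, 0 < T → ∀ v : ℝ → ℝ → ℝ,
      Measurable (Function.uncurry v) → (∀ s y, 0 ≤ v s y) →
      ∀ t ∈ Set.Icc (0 : ℝ) T, ∀ x ∈ Set.Icc (0 : ℝ) 1,
        (∫⁻ s in Set.Icc (0 : ℝ) t, ∫⁻ y in Set.Icc (0 : ℝ) 1,
            ENNReal.ofReal (G (t - s) x y ^ 2 * v s y))
          ≤ ENNReal.ofReal C *
            ∫⁻ s in Set.Icc (0 : ℝ) t,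
              ENNReal.ofReal ((t - s) ^ (1 / (2 * p) - 1)) *
                (∫⁻ y in Set.Icc (0 : ℝ) 1,
                    ENNReal.ofReal (v s y ^ (p / (p - 1)))) ^ (1 / (p / (p - 1))) := by
  refine ⟨1, one_pos, fun T _ v hv hv0 t _ x _ => ?_⟩
  rw [ENNReal.ofReal_one, one_mul]
  refine lintegral_mono fun s => ?_
  rcases le_or_gt (t - s) 0 with hs | hs
  · -- here `G (t - s) = 0` by convention
    simp [G, not_lt.2 hs]
  have hq : 0 < p / (p - 1) := div_pos (by linarith) (by linarith)
  have hvm : Measurable (v s) := hv.of_uncurry_left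
  have hH := ENNReal.lintegral_mul_le_Lp_mul_Lq (volume.restrict (Icc (0 : ℝ) 1))
    (Real.HolderConjugate.conjExponent hp)
    (f := fun y => ENNReal.ofReal (G (t - s) x y ^ 2)) (g := fun y => ENNReal.ofReal (v s y))
    ((measurable_G hs x).pow_const 2).ennreal_ofReal.aemeasurable
    hvm.ennreal_ofReal.aemeasurable
  simp only [Pi.mul_apply, Real.conjExponent] at hH
  simp_rw [ENNReal.ofReal_mul (sq_nonneg _)]
  refine hH.trans ?_
  simp_rw [ENNReal.ofReal_rpow_of_nonneg (hv0 s _) hq.le]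
  exact mul_le_mul_left (Lp_G_sq_le hp hs x) _
end

section
/- Let T > 0 and let H(s,t;x,y) be a measurable nonnegative function defined for 0 ≤ s < t ≤ T and x, y ∈ ℝ such that there exist constants K, α > 0 with H(s,t;x,y) ≤ K (t−s)^{-1} exp(−α (x−y)²/(t−s)) for all 0 ≤ s < t ≤ T and x, y ∈ ℝ. Fix ρ ∈ [1,∞], q ∈ [1,ρ) and set k = 1 + 1/ρ − 1/q (with the convention 1/∞ = 0). Then there exists a constant C > 0 such that for every measurable nonnegative v : [0,T] × [0,1] → ℝ and every t ∈ [0,T], the function J(v)(t,·) defined by J(v)(t,x) = ∫₀ᵗ ∫₀¹ H(s,t;x,y) v(s,y) dy ds satisfies ‖J(v)(t,·)‖_{L^ρ([0,1])} ≤ C ∫₀ᵗ (t−s)^{k/2 − 1} ‖v(s,·)‖_{L^q([0,1])} ds (the inequality understood in [0,∞]). -/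
/-!
The kernel is dominated by `g τ (x - y)`, `τ = t - s`, where `g τ z = K τ⁻¹ exp (-α z² / τ)`.
With `k = 1 + 1/ρ - 1/q`, a Gaussian integral gives `‖g τ‖_{L^{1/k}(ℝ)} = C τ ^ (k/2 - 1)` for
`C = K (π k / α) ^ (k/2)` (`lintegral_gaussK_rpow`). Young's convolution inequality
(`young_restrict`) therefore bounds the `L^ρ` norm of the inner integral at time `s` by
`C (t - s) ^ (k/2 - 1) ‖v(s,·)‖_q`, and Minkowski's integral inequality
(`minkowski_of_bound`) allows this bound to be integrated over `s`.

Both inequalities are consequences of Hölder's inequality with suitable weights. For `ρ = ∞`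
Young's inequality is a pointwise Hölder bound, and no Minkowski inequality is needed; when
moreover `q = 1`, one has `k = 0` and the kernel is simply bounded by its supremum `K / τ`, which
agrees with the formula for `C` because `0 ^ 0 = 1`.
-/

open Real MeasureTheory Set ENNReal

/-- The `L^ρ([0,1])` norm of an `ℝ≥0∞`-valued function, for `ρ ∈ [1,∞]`
(essential supremum when `ρ = ∞`). -/
noncomputable def LnormENN (f : ℝ → ℝ≥0∞) (ρ : ℝ≥0∞) : ℝ≥0∞ :=
  if ρ = ∞ then essSup f (volume.restrict (Set.Icc (0 : ℝ) 1))
  else (∫⁻ x in Set.Icc (0 : ℝ) 1, f x ^ ρ.toReal) ^ (1 / ρ.toReal)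

/-! ### The Gaussian kernel -/

/-- The Gaussian `K τ⁻¹ exp (-α z² / τ)` dominating the kernel, as an `ℝ≥0∞`-valued function. -/
noncomputable def gaussK (K α τ z : ℝ) : ℝ≥0∞ :=
  ENNReal.ofReal (K * τ⁻¹ * Real.exp (-α * z ^ 2 / τ))

lemma measurable_gaussK (K α : ℝ) : Measurable (fun p : ℝ × ℝ => gaussK K α p.1 p.2) := by
  unfold gaussK
  fun_prop

/-- The `L^{1/k}(ℝ)` norm of the Gaussian kernel. -/
lemma lintegral_gaussK_rpow {K α τ k : ℝ} (hK : 0 < K) (hα : 0 < α) (hτ : 0 < τ) (hk : 0 < k) :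
    (∫⁻ z, gaussK K α τ z ^ (1 / k)) ^ k
      = ENNReal.ofReal (K * (π * k / α) ^ (k / 2) * τ ^ (k / 2 - 1)) := by
  have hb : 0 < α / (τ * k) := by positivity
  have h1 : ∀ z, gaussK K α τ z ^ (1 / k)
      = ENNReal.ofReal ((K * τ⁻¹) ^ (1 / k)) *
        ENNReal.ofReal (Real.exp (-(α / (τ * k)) * z ^ 2)) := by
    intro z
    unfold gaussK
    rw [ENNReal.ofReal_rpow_of_nonneg (by positivity) (by positivity),
      Real.mul_rpow (by positivity) (by positivity), ENNReal.ofReal_mul (by positivity),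
      ← Real.exp_mul]
    congr 3
    field_simp
  simp_rw [h1]
  rw [lintegral_const_mul _ (by fun_prop),
    ← ofReal_integral_eq_lintegral_ofReal (integrable_exp_neg_mul_sq hb)
      (Filter.Eventually.of_forall fun _ => (Real.exp_pos _).le),
    integral_gaussian, ← ENNReal.ofReal_mul (by positivity),
    ENNReal.ofReal_rpow_of_nonneg (by positivity) hk.le]
  congr 1
  rw [Real.mul_rpow (by positivity) (by positivity), ← Real.rpow_mul (by positivity),
    one_div_mul_cancel hk.ne', Real.rpow_one, Real.sqrt_eq_rpow, ← Real.rpow_mul (by positivity)]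
  have h2 : π / (α / (τ * k)) = (π * k / α) * τ := by field_simp
  rw [h2, Real.mul_rpow (by positivity) hτ.le, Real.rpow_sub hτ, Real.rpow_one]
  have : 1 / 2 * k = k / 2 := by ring
  rw [this]
  field_simp

/-! ### Young's inequality -/

/-- Three-exponent Hölder inequality behind Young's inequality, where `a` stands for `1/ρ`;
the value `a = 0` is allowed and gives the usual Hölder inequality. -/
lemma holder_three {X : Type*} [MeasurableSpace X] {μ : Measure X} {g w : X → ℝ≥0∞}
    (hg : Measurable g) (hw : Measurable w) {a k q : ℝ} (ha : 0 ≤ a) (hk : 0 < k) (hq : 0 < q)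
    (hak : a ≤ k) (haq : a ≤ 1 / q) (hsum : k = 1 + a - 1 / q) :
    ∫⁻ y, g y * w y ∂μ ≤ (∫⁻ y, g y ^ (1 / k) * w y ^ q ∂μ) ^ a *
      (∫⁻ y, g y ^ (1 / k) ∂μ) ^ (k - a) * (∫⁻ y, w y ^ q ∂μ) ^ (1 / q - a) := by
  have h := ENNReal.lintegral_prod_norm_pow_le (μ := μ) (Finset.univ : Finset (Fin 3))
    (f := ![fun y => g y ^ (1 / k) * w y ^ q, fun y => g y ^ (1 / k), fun y => w y ^ q])
    (p := ![a, k - a, 1 / q - a])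
    (by
      intro i _
      fin_cases i
      · exact ((hg.pow_const _).mul (hw.pow_const _)).aemeasurable
      · exact (hg.pow_const _).aemeasurable
      · exact (hw.pow_const _).aemeasurable)
    (by simp [Fin.sum_univ_three]; rw [hsum]; ring)
    (by
      intro i _
      fin_cases i
      · exact ha
      · exact sub_nonneg.2 hak
      · exact sub_nonneg.2 haq)
  simp only [Fin.prod_univ_three, Matrix.cons_val_zero, Matrix.cons_val_one,
    Matrix.cons_val_two, Matrix.head_cons, Matrix.tail_cons] at h
  refine le_trans (le_of_eq (lintegral_congr fun y => ?_)) h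
  have e1 : (g y ^ (1 / k)) ^ a * (g y ^ (1 / k)) ^ (k - a) = g y := by
    rw [← ENNReal.rpow_add_of_nonneg _ _ ha (sub_nonneg.2 hak), ← ENNReal.rpow_mul]
    have : 1 / k * (a + (k - a)) = 1 := by field_simp; ring
    rw [this, ENNReal.rpow_one]
  have e2 : (w y ^ q) ^ a * (w y ^ q) ^ (1 / q - a) = w y := by
    rw [← ENNReal.rpow_add_of_nonneg _ _ ha (sub_nonneg.2 haq), ← ENNReal.rpow_mul]
    have : q * (a + (1 / q - a)) = 1 := by field_simp; ring
    rw [this, ENNReal.rpow_one]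
  rw [ENNReal.mul_rpow_of_nonneg _ _ ha]
  calc g y * w y = ((g y ^ (1 / k)) ^ a * (g y ^ (1 / k)) ^ (k - a)) *
        ((w y ^ q) ^ a * (w y ^ q) ^ (1 / q - a)) := by rw [e1, e2]
    _ = _ := by ring

/-- Young's convolution inequality with exponents `1/k`, `q`, `ρ`, restricted to a set. -/
lemma young_restrict {g w : ℝ → ℝ≥0∞} (hg : Measurable g) (hw : Measurable w) (S : Set ℝ)
    {ρ k q : ℝ} (hq : 1 ≤ q) (hqρ : q < ρ) (hsum : k = 1 + 1 / ρ - 1 / q) :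
    ∫⁻ x in S, (∫⁻ y in S, g (x - y) * w y) ^ ρ ≤
      ((∫⁻ z, g z ^ (1 / k)) ^ k * (∫⁻ y in S, w y ^ q) ^ (1 / q)) ^ ρ := by
  have hq0 : 0 < q := by linarith
  have hρ : 0 < ρ := by linarith
  have ha : 0 < 1 / ρ := by positivity
  have haq : 1 / ρ ≤ 1 / q := one_div_le_one_div_of_le hq0 hqρ.le
  have hq1 : 1 / q ≤ 1 := by rw [div_le_one hq0]; exact hq
  have hak : 1 / ρ ≤ k := by linarith
  have hk : 0 < k := by linarith
  set M := ∫⁻ z, g z ^ (1 / k) with hM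
  set N := ∫⁻ y in S, w y ^ q with hN
  have hpt : ∀ x, (∫⁻ y in S, g (x - y) * w y) ^ ρ ≤
      (∫⁻ y in S, g (x - y) ^ (1 / k) * w y ^ q) *
        (M ^ (ρ * k - 1) * N ^ (ρ / q - 1)) := by
    intro x
    have h := holder_three (μ := volume.restrict S) (g := fun y => g (x - y)) (w := w)
      (by fun_prop) hw ha.le hk hq0 hak haq hsum
    have hMx : ∫⁻ y in S, g (x - y) ^ (1 / k) ≤ M :=
      (setLIntegral_le_lintegral _ _).trans_eq
        (lintegral_sub_left_eq_self (fun z => g z ^ (1 / k)) x)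
    refine (ENNReal.rpow_le_rpow h hρ.le).trans ?_
    rw [ENNReal.mul_rpow_of_nonneg _ _ hρ.le, ENNReal.mul_rpow_of_nonneg _ _ hρ.le,
      ← ENNReal.rpow_mul, ← ENNReal.rpow_mul, ← ENNReal.rpow_mul, one_div_mul_cancel hρ.ne',
      ENNReal.rpow_one, mul_assoc]
    have e1 : (k - 1 / ρ) * ρ = ρ * k - 1 := by field_simp
    have e2 : (1 / q - 1 / ρ) * ρ = ρ / q - 1 := by field_simp
    rw [e1, e2]
    gcongr
    rw [← e1]
    exact mul_nonneg (sub_nonneg.2 hak) hρ.le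
  have hswap : ∫⁻ x in S, ∫⁻ y in S, g (x - y) ^ (1 / k) * w y ^ q ≤ M * N := by
    rw [lintegral_lintegral_swap (by
      refine Measurable.aemeasurable ?_
      simp only [Function.uncurry_def]
      fun_prop)]
    rw [hN, ← lintegral_const_mul _ (by fun_prop)]
    refine lintegral_mono fun y => ?_
    rw [lintegral_mul_const _ (by fun_prop)]
    gcongr
    exact (setLIntegral_le_lintegral _ _).trans_eq
        (lintegral_sub_right_eq_self (fun z => g z ^ (1 / k)) y)
  have hkρ : 0 ≤ ρ * k - 1 := by
    have := mul_le_mul_of_nonneg_left hak hρ.le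
    rw [mul_one_div_cancel hρ.ne'] at this
    linarith
  have hqρ' : 0 ≤ ρ / q - 1 := by
    rw [sub_nonneg, le_div_iff₀ hq0]; linarith
  calc ∫⁻ x in S, (∫⁻ y in S, g (x - y) * w y) ^ ρ
      ≤ ∫⁻ x in S, (∫⁻ y in S, g (x - y) ^ (1 / k) * w y ^ q) *
        (M ^ (ρ * k - 1) * N ^ (ρ / q - 1)) := lintegral_mono hpt
    _ = (∫⁻ x in S, ∫⁻ y in S, g (x - y) ^ (1 / k) * w y ^ q) *
        (M ^ (ρ * k - 1) * N ^ (ρ / q - 1)) := by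
        rw [lintegral_mul_const _ ?_]
        refine Measurable.lintegral_prod_right'
          (f := fun p : ℝ × ℝ => g (p.1 - p.2) ^ (1 / k) * w p.2 ^ q) ?_
        fun_prop
    _ ≤ (M * N) * (M ^ (ρ * k - 1) * N ^ (ρ / q - 1)) := by gcongr
    _ = (M ^ (1 : ℝ) * M ^ (ρ * k - 1)) * (N ^ (1 : ℝ) * N ^ (ρ / q - 1)) := by
        rw [ENNReal.rpow_one, ENNReal.rpow_one]; ring
    _ = M ^ (ρ * k) * N ^ (ρ / q) := by
        rw [← ENNReal.rpow_add_of_nonneg _ _ zero_le_one hkρ,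
          ← ENNReal.rpow_add_of_nonneg _ _ zero_le_one hqρ']
        congr 2 <;> ring
    _ = _ := by
        rw [ENNReal.mul_rpow_of_nonneg _ _ hρ.le, ← ENNReal.rpow_mul, ← ENNReal.rpow_mul]
        congr 2 <;> ring

/-! ### Minkowski's integral inequality -/

/-- Minkowski's integral inequality, with `A s` an upper bound for the `L^ρ` norm of `f s`.
It is Hölder's inequality in `s` for `f = (f ^ ρ * A ^ (1 - ρ)) ^ (1/ρ) * A ^ (1 - 1/ρ)`, followed
by Tonelli; `hA0` makes this factorization valid where `A` vanishes. -/
lemma minkowski_of_bound {X Y : Type*} [MeasurableSpace X] [MeasurableSpace Y] {μ : Measure X}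
    {ν : Measure Y} [SFinite μ] [SFinite ν] {f : X → Y → ℝ≥0∞} {A : X → ℝ≥0∞} {ρ : ℝ} (hρ : 1 ≤ ρ)
    (hf : Measurable (Function.uncurry f)) (hA : Measurable A)
    (hA0 : ∀ᵐ s ∂μ, A s = 0 → ∀ x, f s x = 0)
    (hfA : ∀ᵐ s ∂μ, ∫⁻ x, f s x ^ ρ ∂ν ≤ A s ^ ρ) :
    ∫⁻ x, (∫⁻ s, f s x ∂μ) ^ ρ ∂ν ≤ (∫⁻ s, A s ∂μ) ^ ρ := by
  have hρ0 : 0 < ρ := by linarith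
  by_cases htop : ∫⁻ s, A s ∂μ = ∞
  · rw [htop, ENNReal.top_rpow_of_pos hρ0]; exact le_top
  have hfin : ∀ᵐ s ∂μ, A s < ∞ := ae_lt_top hA htop
  have h1ρ : 1 / ρ ≤ 1 := by rw [div_le_one hρ0]; exact hρ
  have hf' : ∀ x, Measurable (fun s => f s x) := fun x => by
    exact hf.comp (measurable_id.prodMk measurable_const)
  have hf'' : ∀ s, Measurable (f s) := fun s => by
    exact hf.comp (measurable_const.prodMk measurable_id)
  have hpt : ∀ x, (∫⁻ s, f s x ∂μ) ^ ρ ≤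
      (∫⁻ s, f s x ^ ρ * A s ^ (1 - ρ) ∂μ) * (∫⁻ s, A s ∂μ) ^ (ρ - 1) := by
    intro x
    have h := ENNReal.lintegral_mul_norm_pow_le (μ := μ)
      (f := fun s => f s x ^ ρ * A s ^ (1 - ρ)) (g := A)
      (((hf' x).pow_const _).mul (hA.pow_const _)).aemeasurable hA.aemeasurable
      (p := 1 / ρ) (q := 1 - 1 / ρ) (by positivity) (by linarith) (by ring)
    have h2 : ∫⁻ s, f s x ∂μ ≤
        ∫⁻ s, (f s x ^ ρ * A s ^ (1 - ρ)) ^ (1 / ρ) * A s ^ (1 - 1 / ρ) ∂μ := by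
      refine lintegral_mono_ae ?_
      filter_upwards [hfin, hA0] with s hs1 hs2
      by_cases h0 : A s = 0
      · rw [hs2 h0 x]; exact zero_le
      · rw [ENNReal.mul_rpow_of_nonneg _ _ (by positivity), ← ENNReal.rpow_mul,
          ← ENNReal.rpow_mul, mul_one_div_cancel hρ0.ne', ENNReal.rpow_one, mul_assoc,
          ← ENNReal.rpow_add _ _ h0 hs1.ne]
        have : (1 - ρ) * (1 / ρ) + (1 - 1 / ρ) = 0 := by field_simp; ring
        rw [this, ENNReal.rpow_zero, mul_one]
    refine (ENNReal.rpow_le_rpow (h2.trans h) hρ0.le).trans_eq ?_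
    rw [ENNReal.mul_rpow_of_nonneg _ _ hρ0.le, ← ENNReal.rpow_mul, ← ENNReal.rpow_mul,
      one_div_mul_cancel hρ0.ne', ENNReal.rpow_one]
    congr 2
    field_simp
  calc ∫⁻ x, (∫⁻ s, f s x ∂μ) ^ ρ ∂ν
      ≤ ∫⁻ x, (∫⁻ s, f s x ^ ρ * A s ^ (1 - ρ) ∂μ) * (∫⁻ s, A s ∂μ) ^ (ρ - 1) ∂ν :=
        lintegral_mono hpt
    _ = (∫⁻ x, ∫⁻ s, f s x ^ ρ * A s ^ (1 - ρ) ∂μ ∂ν) * (∫⁻ s, A s ∂μ) ^ (ρ - 1) := by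
        rw [lintegral_mul_const' _ _ (ENNReal.rpow_ne_top_of_nonneg (by linarith) htop)]
    _ = (∫⁻ s, ∫⁻ x, f s x ^ ρ * A s ^ (1 - ρ) ∂ν ∂μ) * (∫⁻ s, A s ∂μ) ^ (ρ - 1) := by
        rw [lintegral_lintegral_swap]
        refine Measurable.aemeasurable ?_
        exact ((hf.comp measurable_swap).pow_const _).mul
          ((hA.comp measurable_snd).pow_const _)
    _ ≤ (∫⁻ s, A s ∂μ) * (∫⁻ s, A s ∂μ) ^ (ρ - 1) := by
        gcongr ?_ * _
        refine lintegral_mono_ae ?_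
        filter_upwards [hfin, hA0, hfA] with s hs1 hs2 hs3
        rw [lintegral_mul_const _ ((hf'' s).pow_const _)]
        by_cases h0 : A s = 0
        · have : ∫⁻ x, f s x ^ ρ ∂ν = 0 := by
            simp [hs2 h0, ENNReal.zero_rpow_of_pos hρ0]
          rw [this, zero_mul]; exact zero_le
        · calc _ ≤ A s ^ ρ * A s ^ (1 - ρ) := by gcongr
            _ = A s := by
              rw [← ENNReal.rpow_add _ _ h0 hs1.ne, add_sub_cancel, ENNReal.rpow_one]
    _ = (∫⁻ s, A s ∂μ) ^ ρ := by
        conv_lhs => enter [1]; rw [← ENNReal.rpow_one (∫⁻ s, A s ∂μ)]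
        rw [← ENNReal.rpow_add_of_nonneg _ _ zero_le_one (by linarith), add_sub_cancel]

/-! ### The operator bound -/

/-- Boundedness of the operator `J(v)(t,x) = ∫₀ᵗ∫₀¹ H(s,t;x,y) v(s,y) dy ds` for a kernel
`H` dominated by a Gaussian: `‖J(v)(t,·)‖_{L^ρ([0,1])} ≤ C ∫₀ᵗ (t−s)^{k/2−1} ‖v(s,·)‖_{L^q} ds`
with `k = 1 + 1/ρ − 1/q`, the inequality understood in `[0,∞]`. -/
theorem gaussian_dominated_operator_bound
    (T : ℝ) (hT : 0 < T) (H : ℝ → ℝ → ℝ → ℝ → ℝ)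
    (hHmeas : Measurable fun q : ℝ × ℝ × ℝ × ℝ => H q.1 q.2.1 q.2.2.1 q.2.2.2)
    (hHnn : ∀ s t x y : ℝ, 0 ≤ s → s < t → t ≤ T → 0 ≤ H s t x y)
    (K α : ℝ) (hK : 0 < K) (hα : 0 < α)
    (hHbound : ∀ s t x y : ℝ, 0 ≤ s → s < t → t ≤ T →
      H s t x y ≤ K * (t - s)⁻¹ * Real.exp (-α * (x - y) ^ 2 / (t - s)))
    (ρ q : ℝ≥0∞) (hρ : 1 ≤ ρ) (hq1 : 1 ≤ q) (hqρ : q < ρ) :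
    ∃ C : ℝ, 0 < C ∧ ∀ v : ℝ → ℝ → ℝ,
      Measurable (Function.uncurry v) → (∀ s y, 0 ≤ v s y) →
      ∀ t ∈ Set.Icc (0 : ℝ) T,
        LnormENN (fun x => ∫⁻ s in Set.Icc (0 : ℝ) t, ∫⁻ y in Set.Icc (0 : ℝ) 1,
            ENNReal.ofReal (H s t x y * v s y)) ρ
          ≤ ENNReal.ofReal C *
            ∫⁻ s in Set.Icc (0 : ℝ) t,
              ENNReal.ofReal ((t - s) ^ ((1 + (1 / ρ).toReal - (1 / q).toReal) / 2 - 1)) *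
                eLpNorm (fun y => v s y) q (volume.restrict (Set.Icc (0 : ℝ) 1)) := by
  set k : ℝ := 1 + (1 / ρ).toReal - (1 / q).toReal with hkdef
  have hqtop : q ≠ ∞ := hqρ.ne_top
  have hq0 : q ≠ 0 := (zero_lt_one.trans_le hq1).ne'
  have hqr1 : 1 ≤ q.toReal := by
    simpa using ENNReal.toReal_mono hqtop hq1
  have hqr0 : 0 < q.toReal := by linarith
  have hqinv : (1 / q).toReal = 1 / q.toReal := by simp
  have hqle : 1 / q.toReal ≤ 1 := by rw [div_le_one hqr0]; exact hqr1
  have hk0 : 0 ≤ k := by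
    have : 0 ≤ (1 / ρ).toReal := ENNReal.toReal_nonneg
    rw [hkdef, hqinv]; linarith
  set C : ℝ := K * (π * k / α) ^ (k / 2) with hC
  have hCpos : 0 < C := by
    rcases hk0.eq_or_lt with h | h
    · rw [hC, ← h]; simpa using hK
    · positivity
  refine ⟨C, hCpos, fun v hv hvnn t ht => ?_⟩
  set I : Set ℝ := Set.Icc (0 : ℝ) 1 with hI
  set w : ℝ → ℝ → ℝ≥0∞ := fun s y => ENNReal.ofReal (v s y) with hw
  have hwm : Measurable (fun p : ℝ × ℝ => w p.1 p.2) := hv.ennreal_ofReal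
  have hwms : ∀ s, Measurable (w s) := fun s => hwm.comp (measurable_const.prodMk measurable_id)
  set N : ℝ → ℝ≥0∞ := fun s => (∫⁻ y in I, w s y ^ q.toReal) ^ (1 / q.toReal) with hN
  have hNm : Measurable N := by
    refine Measurable.pow_const ?_ _
    exact Measurable.lintegral_prod_right' (f := fun p : ℝ × ℝ => w p.1 p.2 ^ q.toReal)
      (hwm.pow_const _)
  have hNv : ∀ s, eLpNorm (fun y => v s y) q (volume.restrict I) = N s := by
    intro s
    rw [eLpNorm_eq_lintegral_rpow_enorm_toReal hq0 hqtop]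
    simp only [hN, hw, Real.enorm_of_nonneg (hvnn s _)]
  simp_rw [hNv]
  set A : ℝ → ℝ≥0∞ := fun s => ENNReal.ofReal (C * (t - s) ^ (k / 2 - 1)) * N s with hA
  have hAm : Measurable A := by
    refine Measurable.mul ?_ hNm
    fun_prop
  have hRHS : ENNReal.ofReal C * ∫⁻ s in Set.Icc (0 : ℝ) t,
      ENNReal.ofReal ((t - s) ^ (k / 2 - 1)) * N s = ∫⁻ s in Set.Icc (0 : ℝ) t, A s := by
    rw [← lintegral_const_mul' _ _ ENNReal.ofReal_ne_top]
    refine lintegral_congr fun s => ?_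
    rw [hA, ← mul_assoc, ← ENNReal.ofReal_mul hCpos.le]
  rw [hRHS]
  set f : ℝ → ℝ → ℝ≥0∞ := fun s x => ∫⁻ y in I, gaussK K α (t - s) (x - y) * w s y with hf
  -- The endpoint `s = t`, where nothing is assumed about the kernel, is a null set.
  have hlt : ∀ᵐ s ∂(volume.restrict (Set.Icc (0 : ℝ) t)), 0 ≤ s ∧ s < t := by
    have h1 : ∀ᵐ s ∂(volume.restrict (Set.Icc (0 : ℝ) t)), s ≠ t :=
      ae_restrict_of_ae (Measure.ae_ne volume t)
    filter_upwards [h1, ae_restrict_mem measurableSet_Icc] with s hs1 hs2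
    exact ⟨hs2.1, lt_of_le_of_ne hs2.2 hs1⟩
  have hJf : ∀ x, ∫⁻ s in Set.Icc (0 : ℝ) t, ∫⁻ y in I, ENNReal.ofReal (H s t x y * v s y) ≤
      ∫⁻ s in Set.Icc (0 : ℝ) t, f s x := by
    intro x
    refine lintegral_mono_ae ?_
    filter_upwards [hlt] with s hs
    refine lintegral_mono fun y => ?_
    rw [ENNReal.ofReal_mul (hHnn s t x y hs.1 hs.2 ht.2)]
    gcongr
    exact ENNReal.ofReal_le_ofReal (hHbound s t x y hs.1 hs.2 ht.2)
  have hgm : ∀ τ, Measurable (gaussK K α τ) := fun τ =>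
    (measurable_gaussK K α).comp (measurable_const.prodMk measurable_id)
  unfold LnormENN
  split_ifs with hρtop
  · refine essSup_le_of_ae_le _ (Filter.Eventually.of_forall fun x => (hJf x).trans ?_)
    refine lintegral_mono_ae ?_
    filter_upwards [hlt] with s hs
    have hτ : 0 < t - s := sub_pos.2 hs.2
    have hkq : k = 1 + 0 - 1 / q.toReal := by rw [hkdef, hqinv, hρtop]; simp
    rcases hk0.eq_or_lt with h | h
    · have hqone : q.toReal = 1 := by
        have : 1 / q.toReal = 1 := by linarith
        rwa [div_eq_one_iff_eq hqr0.ne', eq_comm] at this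
      have hNs : N s = ∫⁻ y in I, w s y := by simp [hN, hqone]
      have hCK : C * (t - s) ^ (k / 2 - 1) = K * (t - s)⁻¹ := by
        rw [hC, ← h]; simp [Real.rpow_neg_one]
      simp only [hA, hf]
      rw [hNs, hCK, ← lintegral_const_mul _ (hwms s)]
      refine lintegral_mono fun y => ?_
      gcongr
      refine ENNReal.ofReal_le_ofReal (mul_le_of_le_one_right (by positivity) ?_)
      rw [Real.exp_le_one_iff]
      exact div_nonpos_of_nonpos_of_nonneg
        (mul_nonpos_of_nonpos_of_nonneg (by linarith) (sq_nonneg _)) hτ.le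
    · have hh := holder_three (μ := volume.restrict I)
        (g := fun y => gaussK K α (t - s) (x - y)) (w := w s)
        ((hgm _).comp (by fun_prop)) (hwms s) le_rfl h hqr0 h.le (by positivity) hkq
      simp only [ENNReal.rpow_zero, one_mul, sub_zero] at hh
      refine hh.trans ?_
      simp only [hA, hN]
      gcongr
      rw [hC, ← lintegral_gaussK_rpow hK hα hτ h]
      refine ENNReal.rpow_le_rpow ?_ h.le
      exact (setLIntegral_le_lintegral _ _).trans_eq
        (lintegral_sub_left_eq_self (fun z => gaussK K α (t - s) z ^ (1 / k)) x)
  · have hqrρ : q.toReal < ρ.toReal := (ENNReal.toReal_lt_toReal hqtop hρtop).2 hqρ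
    have hρ1 : 1 ≤ ρ.toReal := by linarith
    have hρ0 : 0 < ρ.toReal := by linarith
    have hkq : k = 1 + 1 / ρ.toReal - 1 / q.toReal := by
      rw [hkdef, hqinv]; simp
    have hkpos : 0 < k := by
      have : 0 < 1 / ρ.toReal := by positivity
      linarith
    have hfm : Measurable (Function.uncurry f) := by
      have h1 : Measurable (fun p : (ℝ × ℝ) × ℝ => gaussK K α (t - p.1.1) (p.1.2 - p.2)) :=
        (measurable_gaussK K α).comp
          (f := fun p : (ℝ × ℝ) × ℝ => (t - p.1.1, p.1.2 - p.2)) (by fun_prop)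
      have h2 : Measurable (fun p : (ℝ × ℝ) × ℝ => w p.1.1 p.2) :=
        hwm.comp (f := fun p : (ℝ × ℝ) × ℝ => (p.1.1, p.2)) (by fun_prop)
      exact (h1.mul h2).lintegral_prod_right'
    have hmain := minkowski_of_bound (μ := volume.restrict (Set.Icc (0 : ℝ) t))
      (ν := volume.restrict I) hρ1 hfm hAm
      (by
        filter_upwards [hlt] with s hs h0 x
        have hτ : 0 < t - s := sub_pos.2 hs.2
        have hN0 : N s = 0 := by
          rcases mul_eq_zero.1 h0 with h | h
          · rw [ENNReal.ofReal_eq_zero] at h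
            exact absurd h (not_le.2 (by positivity))
          · exact h
        have hint : ∫⁻ y in I, w s y ^ q.toReal = 0 :=
          (ENNReal.rpow_eq_zero_iff_of_pos (by positivity)).1 hN0
        rw [lintegral_eq_zero_iff ((hwms s).pow_const _)] at hint
        simp only [hf]
        rw [lintegral_eq_zero_iff' ?_]
        · filter_upwards [hint] with y hy
          have : w s y = 0 := (ENNReal.rpow_eq_zero_iff_of_pos hqr0).1 hy
          simp [this]
        · exact (((hgm _).comp (by fun_prop)).mul (hwms s)).aemeasurable)
      (by
        filter_upwards [hlt] with s hs
        have hτ : 0 < t - s := sub_pos.2 hs.2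
        have hy := young_restrict (hgm (t - s)) (hwms s) I hqr1 hqrρ hkq
        rw [lintegral_gaussK_rpow hK hα hτ hkpos] at hy
        exact hy)
    calc _ ≤ (∫⁻ x in I, (∫⁻ s in Set.Icc (0 : ℝ) t, f s x) ^ ρ.toReal) ^ (1 / ρ.toReal) := by
          gcongr with x
          exact hJf x
      _ ≤ ((∫⁻ s in Set.Icc (0 : ℝ) t, A s) ^ ρ.toReal) ^ (1 / ρ.toReal) := by gcongr
      _ = _ := by
          rw [← ENNReal.rpow_mul, mul_one_div_cancel hρ0.ne', ENNReal.rpow_one]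
end

section
/- For every t > 0, every ε with 0 < ε ≤ min{t, 3/(4π²)}, and every x ∈ (0,1), one has the lower bound ∫_{t−ε}^t ∫₀¹ G_{t−s}(x,y)² dy ds ≥ ε · sin²(πx). In particular, for 0 < l < 1/2 and x ∈ [l, 1−l] this integral is at least ε · min{sin²(πl), sin²(π(1−l))}. -/
/-!
By orthogonality of the functions `y ↦ sin (nπy)` on `[0,1]`, for every `r > 0`
`∫₀¹ G_r(x,y)² dy = ∑ 2 e^{-2π²n²r} sin²(nπx)` (`integral_G_sq`). The terms are nonnegative and
the integral over `r ∈ (0,ε]` of the `n`-th one is `sin²(nπx) (1 - e^{-2π²n²ε}) / (π²n²)`, which is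
summable in `n`. Hence integration and summation may be exchanged, and the double integral is at
least its `n = 1` term `sin²(πx) (1 - e^{-2π²ε}) / π²`. With `a = π²ε ≤ 3/4`, the bound
`ε sin²(πx)` is then the elementary inequality `e^{-2a} ≤ 1 - a` (`exp_neg_two_mul_le`).
The second claim follows since `sin (πx) ≥ sin (πl)` on `[l, 1-l]`.
-/

open Real MeasureTheory Set

lemma exp_neg_two_mul_le {a : ℝ} (h0 : 0 ≤ a) (h1 : a ≤ 3 / 4) :
    Real.exp (-2 * a) ≤ 1 - a := by
  have h := Real.sum_le_exp_of_nonneg (x := 2 * a) (by positivity) 4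
  simp only [Finset.sum_range_succ, Finset.sum_range_zero, Nat.factorial] at h
  norm_num at h
  have hm : Real.exp (-2 * a) * Real.exp (2 * a) = 1 := by
    rw [← Real.exp_add]; simp
  have key : 1 ≤ (1 - a) * Real.exp (2 * a) := by
    have h2 : 1 ≤ (1 - a) * (1 + 2 * a + (2 * a) ^ 2 / 2 + (2 * a) ^ 3 / 6) := by
      -- the right side equals `1 + a - (2/3) a³ - (4/3) a⁴`
      have h3 : a ^ 2 ≤ 9 / 16 := by nlinarith
      have h4 : a ^ 3 ≤ 27 / 64 := by nlinarith
      nlinarith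
    exact h2.trans (mul_le_mul_of_nonneg_left h (by linarith))
  have hp := Real.exp_pos (2 * a)
  nlinarith

lemma integral_cos_int_mul_pi {c : ℝ} (hc : c ≠ 0) (hs : Real.sin (c * π) = 0) :
    ∫ y in (0 : ℝ)..1, Real.cos (c * π * y) = 0 := by
  rw [intervalIntegral.integral_comp_mul_left (f := Real.cos) (mul_ne_zero hc Real.pi_ne_zero)]
  simp [hs]

lemma integral_sin_mul_sin (n m : ℕ) :
    ∫ y in (0 : ℝ)..1, Real.sin (((n : ℝ) + 1) * π * y) * Real.sin (((m : ℝ) + 1) * π * y)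
      = if m = n then 1 / 2 else 0 := by
  have hrw : ∀ y : ℝ, Real.sin (((n : ℝ) + 1) * π * y) * Real.sin (((m : ℝ) + 1) * π * y)
      = (1 / 2) * Real.cos (((n : ℝ) - m) * π * y)
        - (1 / 2) * Real.cos (((n : ℝ) + m + 2) * π * y) := by
    intro y
    have e1 : ((n : ℝ) - m) * π * y = ((n : ℝ) + 1) * π * y - ((m : ℝ) + 1) * π * y := by ring
    have e2 : ((n : ℝ) + m + 2) * π * y = ((n : ℝ) + 1) * π * y + ((m : ℝ) + 1) * π * y := by ring
    rw [e1, e2, Real.cos_sub, Real.cos_add]; ring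
  simp_rw [hrw]
  rw [intervalIntegral.integral_sub (by apply Continuous.intervalIntegrable; fun_prop)
    (by apply Continuous.intervalIntegrable; fun_prop),
    intervalIntegral.integral_const_mul, intervalIntegral.integral_const_mul,
    integral_cos_int_mul_pi (c := (n : ℝ) + m + 2) (by positivity)
      (by have := Real.sin_nat_mul_pi (n + m + 2); push_cast at this; exact this)]
  split_ifs with h
  · subst h; simp
  · rw [integral_cos_int_mul_pi (c := (n : ℝ) - m)
      (by rw [sub_ne_zero]; exact_mod_cast Ne.symm h)
      (by have := Real.sin_int_mul_pi ((n : ℤ) - m); push_cast at this; exact this)]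
    simp

/-- Term-by-term integration of an absolutely convergent sine series against a continuous
function. -/
lemma hasSum_integral_sine_series {c : ℕ → ℝ} (hc : Summable fun n => |c n|) {g : ℝ → ℝ}
    (hg : Continuous g) :
    HasSum (fun n : ℕ => c n * ∫ y in (0 : ℝ)..1, Real.sin (((n : ℝ) + 1) * π * y) * g y)
      (∫ y in (0 : ℝ)..1, (∑' n : ℕ, c n * Real.sin (((n : ℝ) + 1) * π * y)) * g y) := by
  have hbd : ∀ (n : ℕ) (y : ℝ), ‖c n * Real.sin (((n : ℝ) + 1) * π * y)‖ ≤ |c n| := by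
    intro n y
    rw [norm_mul, Real.norm_eq_abs, Real.norm_eq_abs]
    exact mul_le_of_le_one_right (abs_nonneg _) (Real.abs_sin_le_one _)
  simp_rw [← intervalIntegral.integral_const_mul, ← mul_assoc]
  refine intervalIntegral.hasSum_integral_of_dominated_convergence
    (fun n y => |c n| * |g y|) (fun n => ?_) (fun n => ?_) ?_ ?_ ?_
  · exact Continuous.aestronglyMeasurable (by fun_prop)
  · filter_upwards with y _
    rw [norm_mul]
    exact mul_le_mul_of_nonneg_right (hbd n y) (abs_nonneg _)
  · filter_upwards with y _
    exact hc.mul_right _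
  · simp_rw [tsum_mul_right]
    apply Continuous.intervalIntegrable
    fun_prop
  · filter_upwards with y _
    exact (Summable.of_norm_bounded hc (fun n => hbd n y)).hasSum.mul_right _

/-- Parseval's identity for absolutely convergent sine series on `[0,1]`. -/
lemma hasSum_integral_sine_series_sq {c : ℕ → ℝ} (hc : Summable fun n => |c n|) :
    HasSum (fun n : ℕ => c n ^ 2 / 2)
      (∫ y in (0 : ℝ)..1, (∑' n : ℕ, c n * Real.sin (((n : ℝ) + 1) * π * y)) ^ 2) := by
  have hbd : ∀ (n : ℕ) (y : ℝ), ‖c n * Real.sin (((n : ℝ) + 1) * π * y)‖ ≤ |c n| := by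
    intro n y
    rw [norm_mul, Real.norm_eq_abs, Real.norm_eq_abs]
    exact mul_le_of_le_one_right (abs_nonneg _) (Real.abs_sin_le_one _)
  have hcont : Continuous fun y : ℝ => ∑' n : ℕ, c n * Real.sin (((n : ℝ) + 1) * π * y) :=
    continuous_tsum (fun n => by fun_prop) hc hbd
  have h := hasSum_integral_sine_series hc hcont
  simp_rw [← pow_two] at h
  convert h using 2 with n
  have h2 := hasSum_integral_sine_series hc
    (g := fun y => Real.sin (((n : ℝ) + 1) * π * y)) (by fun_prop)
  simp_rw [integral_sin_mul_sin] at h2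
  have h3 := h2.unique (hasSum_single n (fun m hm => by simp [hm.symm]))
  simp_rw [mul_comm (Real.sin (((n : ℝ) + 1) * π * _))]
  rw [h3]
  simp
  ring

lemma summable_coeff {r : ℝ} (hr : 0 < r) (x : ℝ) :
    Summable fun n : ℕ => |2 * Real.exp (-(π ^ 2) * ((n : ℝ) + 1) ^ 2 * r)
      * Real.sin (((n : ℝ) + 1) * π * x)| := by
  have hp : 0 < π ^ 2 * r := by positivity
  have hs : Summable fun n : ℕ => 2 * Real.exp (n * (-(π ^ 2 * r))) :=
    (Real.summable_exp_nat_mul_iff.mpr (by linarith)).mul_left 2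
  refine Summable.of_nonneg_of_le (fun n => abs_nonneg _) (fun n => ?_) hs
  rw [abs_mul, abs_of_pos (by positivity)]
  refine (mul_le_of_le_one_right (by positivity) (Real.abs_sin_le_one _)).trans ?_
  refine mul_le_mul_of_nonneg_left (Real.exp_le_exp.mpr ?_) zero_le_two
  have hn : (0 : ℝ) ≤ n := n.cast_nonneg
  nlinarith [mul_nonneg hp.le hn, mul_nonneg hp.le (mul_nonneg hn hn)]

lemma integral_G_sq {r : ℝ} (hr : 0 < r) (x : ℝ) :
    ∫ y in Set.Icc (0 : ℝ) 1, (G r x y) ^ 2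
      = ∑' n : ℕ, 2 * Real.sin (((n : ℝ) + 1) * π * x) ^ 2
          * Real.exp (-(2 * π ^ 2 * ((n : ℝ) + 1) ^ 2) * r) := by
  rw [integral_Icc_eq_integral_Ioc, ← intervalIntegral.integral_of_le zero_le_one]
  simp only [G, if_pos hr]
  rw [← (hasSum_integral_sine_series_sq (summable_coeff hr x)).tsum_eq]
  refine tsum_congr fun n => ?_
  have : Real.exp (-(2 * π ^ 2 * ((n : ℝ) + 1) ^ 2) * r)
      = Real.exp (-(π ^ 2) * ((n : ℝ) + 1) ^ 2 * r) ^ 2 := by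
    rw [← Real.exp_nat_mul]; congr 1; push_cast; ring
  rw [this]; ring

lemma integral_exp_neg_mul {b : ℝ} (hb : b ≠ 0) (ε : ℝ) :
    ∫ r in (0 : ℝ)..ε, Real.exp (-b * r) = (1 - Real.exp (-b * ε)) / b := by
  rw [intervalIntegral.integral_comp_mul_left (f := Real.exp) (neg_ne_zero.mpr hb), integral_exp]
  simp only [mul_zero, Real.exp_zero, smul_eq_mul]
  field_simp
  ring

lemma kernel_lower_bound_aux {t ε : ℝ} (hε : 0 < ε) (hε' : ε ≤ 3 / (4 * π ^ 2)) (x : ℝ) :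
    ε * Real.sin (π * x) ^ 2
      ≤ ∫ s in Set.Icc (t - ε) t, ∫ y in Set.Icc (0 : ℝ) 1, (G (t - s) x y) ^ 2 := by
  have hpi := Real.pi_pos
  rw [integral_Icc_eq_integral_Ioc, ← intervalIntegral.integral_of_le (by linarith),
    intervalIntegral.integral_comp_sub_left (fun r => ∫ y in Set.Icc (0 : ℝ) 1, (G r x y) ^ 2) t,
    sub_self, sub_sub_cancel, intervalIntegral.integral_of_le hε.le,
    setIntegral_congr_fun measurableSet_Ioc (fun r hr => integral_G_sq hr.1 x)]
  set F : ℕ → ℝ → ℝ := fun n r => 2 * Real.sin (((n : ℝ) + 1) * π * x) ^ 2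
    * Real.exp (-(2 * π ^ 2 * ((n : ℝ) + 1) ^ 2) * r) with hF
  have hF0 : ∀ n r, 0 ≤ F n r := fun n r => by positivity
  have hFint : ∀ n, ∫ r in Set.Ioc 0 ε, F n r = 2 * Real.sin (((n : ℝ) + 1) * π * x) ^ 2
      * ((1 - Real.exp (-(2 * π ^ 2 * ((n : ℝ) + 1) ^ 2) * ε))
        / (2 * π ^ 2 * ((n : ℝ) + 1) ^ 2)) := by
    intro n
    rw [← intervalIntegral.integral_of_le hε.le]
    simp only [hF]
    rw [intervalIntegral.integral_const_mul, integral_exp_neg_mul (by positivity)]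
  have hsum : Summable fun n : ℕ => 2 * (1 / (2 * π ^ 2) * (1 / ((n : ℝ) + 1) ^ 2)) := by
    have h := (summable_nat_add_iff 1).mpr (Real.summable_one_div_nat_pow.mpr one_lt_two)
    push_cast at h
    exact (h.mul_left _).mul_left _
  have hS : HasSum (fun n => ∫ r in Set.Ioc 0 ε, F n r) (∫ r in Set.Ioc 0 ε, ∑' n, F n r) := by
    refine hasSum_integral_of_summable_integral_norm (fun n => ?_) ?_
    · have : Continuous (F n) := by simp only [hF]; fun_prop
      exact this.integrableOn_Ioc
    · simp_rw [Real.norm_of_nonneg (hF0 _ _)]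
      refine Summable.of_nonneg_of_le (fun n => integral_nonneg (hF0 n)) (fun n => ?_) hsum
      rw [hFint, one_div_mul_one_div]
      have hs1 := Real.sin_sq_le_one (((n : ℝ) + 1) * π * x)
      have he := Real.exp_pos (-(2 * π ^ 2 * ((n : ℝ) + 1) ^ 2) * ε)
      have hd : (1 - Real.exp (-(2 * π ^ 2 * ((n : ℝ) + 1) ^ 2) * ε))
          / (2 * π ^ 2 * ((n : ℝ) + 1) ^ 2) ≤ 1 / (2 * π ^ 2 * ((n : ℝ) + 1) ^ 2) := by
        gcongr; linarith
      calc _ ≤ 2 * Real.sin (((n : ℝ) + 1) * π * x) ^ 2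
            * (1 / (2 * π ^ 2 * ((n : ℝ) + 1) ^ 2)) := by gcongr
        _ ≤ 2 * 1 * (1 / (2 * π ^ 2 * ((n : ℝ) + 1) ^ 2)) := by gcongr
        _ = _ := by ring
  have hle := le_hasSum hS 0 (fun n _ => integral_nonneg (hF0 n))
  refine le_trans ?_ hle
  rw [hFint]
  have ha := exp_neg_two_mul_le (a := π ^ 2 * ε) (by positivity)
    (by rw [le_div_iff₀ (by positivity)] at hε'; linarith)
  have e : -(2 * π ^ 2 * (((0 : ℕ) : ℝ) + 1) ^ 2) * ε = -2 * (π ^ 2 * ε) := by push_cast; ring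
  rw [e]
  have e2 : (((0 : ℕ) : ℝ) + 1) = 1 := by simp
  rw [e2, one_mul]
  have h3 : ε ≤ (1 - Real.exp (-2 * (π ^ 2 * ε))) / π ^ 2 := by
    rw [le_div_iff₀ (by positivity)]; linarith
  calc ε * Real.sin (π * x) ^ 2
      ≤ (1 - Real.exp (-2 * (π ^ 2 * ε))) / π ^ 2 * Real.sin (π * x) ^ 2 := by gcongr
    _ = _ := by field_simp

/-- Lower bound for the kernel energy near time `t`: for `0 < ε ≤ min{t, 3/(4π²)}` and
`x ∈ (0,1)`, `∫_{t−ε}^t ∫₀¹ G_{t−s}(x,y)² dy ds ≥ ε sin²(πx)`; in particular, for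
`0 < l < 1/2` and `x ∈ [l, 1−l]` it is at least `ε · min{sin²(πl), sin²(π(1−l))}`. -/
theorem kernel_square_integral_lower_bound :
    (∀ t : ℝ, 0 < t → ∀ ε : ℝ, 0 < ε → ε ≤ min t (3 / (4 * Real.pi ^ 2)) →
      ∀ x ∈ Set.Ioo (0 : ℝ) 1,
        ε * Real.sin (Real.pi * x) ^ 2
          ≤ ∫ s in Set.Icc (t - ε) t, ∫ y in Set.Icc (0 : ℝ) 1, (G (t - s) x y) ^ 2) ∧
    (∀ t : ℝ, 0 < t → ∀ ε : ℝ, 0 < ε → ε ≤ min t (3 / (4 * Real.pi ^ 2)) →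
      ∀ l : ℝ, 0 < l → l < 1 / 2 → ∀ x ∈ Set.Icc l (1 - l),
        ε * min (Real.sin (Real.pi * l) ^ 2) (Real.sin (Real.pi * (1 - l)) ^ 2)
          ≤ ∫ s in Set.Icc (t - ε) t, ∫ y in Set.Icc (0 : ℝ) 1, (G (t - s) x y) ^ 2) := by
  refine ⟨fun t _ ε hε hε' x _ => kernel_lower_bound_aux hε (hε'.trans (min_le_right _ _)) x,
    fun t _ ε hε hε' l hl hl' x hx => ?_⟩
  refine le_trans ?_ (kernel_lower_bound_aux hε (hε'.trans (min_le_right _ _)) x)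
  have hpi := Real.pi_pos
  have hl0 : 0 ≤ Real.sin (π * l) :=
    Real.sin_nonneg_of_nonneg_of_le_pi (by positivity) (by nlinarith)
  have hmono : ∀ z : ℝ, l ≤ z → z ≤ 1 / 2 → Real.sin (π * l) ≤ Real.sin (π * z) := fun z h1 h2 =>
    Real.sin_le_sin_of_le_of_le_pi_div_two (by nlinarith) (by nlinarith) (by nlinarith)
  have hsin : Real.sin (π * l) ≤ Real.sin (π * x) := by
    rcases le_total x (1 / 2) with h | h
    · exact hmono x hx.1 h
    · have h2 := hmono (1 - x) (by linarith [hx.2]) (by linarith)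
      rwa [mul_sub, mul_one, Real.sin_pi_sub] at h2
  gcongr
  exact (min_le_left _ _).trans (by gcongr)
end

section
/- There exists a constant C > 0 such that for all x, y ∈ [0,1], ∑_{n=1}^∞ (sin(nπx) − sin(nπy))² / (π² n²) ≤ C |x − y|. -/
open Real

/-!
Since `(sin a - sin b)² + (cos a - cos b)² = 2 (1 - cos (a - b))`, the sine difference satisfies
`(sin a - sin b)² ≤ 2 (1 - cos (a - b))`.
With `d = |x - y| ∈ [0, 1]`, the series is therefore bounded by
`(2/π²) ∑ (1 - cos (nπd)) / n²`, and the Fourier series of the second Bernoulli polynomial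
evaluates this bound in closed form as `d - d²/2 ≤ d`. Hence `C = 1` works.
-/

lemma sq_sin_sub_sin_le (a b : ℝ) : (sin a - sin b) ^ 2 ≤ 2 * (1 - cos (a - b)) := by
  -- The difference of the two sides is `(cos a - cos b)²`.
  rw [cos_sub]
  nlinarith [sin_sq_add_cos_sq a, sin_sq_add_cos_sq b, sq_nonneg (cos a - cos b)]

lemma hasSum_one_sub_cos_div_sq {t : ℝ} (ht : t ∈ Set.Icc (0 : ℝ) 1) :
    HasSum (fun n : ℕ => (1 - cos (2 * π * ((n : ℝ) + 1) * t)) / ((n : ℝ) + 1) ^ 2)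
      (π ^ 2 * (t - t ^ 2)) := by
  have h1 := hasSum_one_div_nat_pow_mul_cos (k := 1) one_ne_zero ht
  have h2 := hasSum_zeta_two.sub h1
  change HasSum _ (_ - (-1) ^ (1 + 1) * (2 * π) ^ (2 * 1) / 2 / ((2 * 1).factorial : ℝ) *
    bernoulliFun 2 t) at h2
  rw [bernoulliFun_two] at h2
  -- The term `n = 0` vanishes, so the index can be shifted.
  rw [← hasSum_nat_add_iff' 1] at h2
  convert h2 using 1
  · rfl
  · funext n
    push_cast
    ring
  · simp [Nat.factorial]
    ring

/-- There is `C > 0` such that for all `x, y ∈ [0,1]`,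
`∑_{n=1}^∞ (sin(nπx) − sin(nπy))²/(π²n²) ≤ C |x−y|`. -/
theorem sine_series_modulus :
    ∃ C : ℝ, 0 < C ∧ ∀ x y : ℝ, x ∈ Set.Icc (0 : ℝ) 1 → y ∈ Set.Icc (0 : ℝ) 1 →
      (∑' n : ℕ, (Real.sin (((n : ℝ) + 1) * Real.pi * x)
          - Real.sin (((n : ℝ) + 1) * Real.pi * y)) ^ 2
            / (Real.pi ^ 2 * ((n : ℝ) + 1) ^ 2))
        ≤ C * |x - y| := by
  refine ⟨1, one_pos, fun x y hx hy => ?_⟩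
  have hd : |x - y| ≤ 1 := abs_le.2 ⟨by linarith [hx.1, hy.2], by linarith [hx.2, hy.1]⟩
  have hd0 := abs_nonneg (x - y)
  have hS := (hasSum_one_sub_cos_div_sq (t := |x - y| / 2)
    ⟨by linarith, by linarith⟩).mul_left (2 / π ^ 2)
  have hle : ∀ n : ℕ, (sin (((n : ℝ) + 1) * π * x) - sin (((n : ℝ) + 1) * π * y)) ^ 2
      / (π ^ 2 * ((n : ℝ) + 1) ^ 2) ≤ 2 / π ^ 2 *
        ((1 - cos (2 * π * ((n : ℝ) + 1) * (|x - y| / 2))) / ((n : ℝ) + 1) ^ 2) := by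
    intro n
    have hc : cos (2 * π * ((n : ℝ) + 1) * (|x - y| / 2))
        = cos (((n : ℝ) + 1) * π * x - ((n : ℝ) + 1) * π * y) := by
      rw [← cos_abs (((n : ℝ) + 1) * π * x - ((n : ℝ) + 1) * π * y), ← mul_sub, abs_mul,
        abs_of_nonneg (show 0 ≤ ((n : ℝ) + 1) * π by positivity)]
      ring_nf
    rw [hc, div_mul_div_comm]
    gcongr
    exact sq_sin_sub_sin_le _ _
  have hsum := Summable.of_nonneg_of_le (fun n => by positivity) hle hS.summable
  refine (hasSum_le hle hsum.hasSum hS).trans ?_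
  have hpi : π ^ 2 ≠ 0 := by positivity
  have hval : 2 / π ^ 2 * (π ^ 2 * (|x - y| / 2 - (|x - y| / 2) ^ 2))
      = |x - y| - |x - y| ^ 2 / 2 := by
    field_simp
  rw [hval]
  nlinarith [sq_nonneg |x - y|]
end

section
/- There exists a constant C > 0 such that for every h > 0, ∑_{n=1}^∞ (1 − e^{−π²n²h})² / (π² n²) ≤ C h^{1/2}. -/
open Real

/-!
With `m = n + 1`, `s = √h` and `x = π²m²h`, the bounds `0 ≤ 1 - e^{-x} ≤ min(x, 1)` give
`(1 - e^{-x})² ≤ 2x/(1+x)`, so the `m`-th term is at most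
`2h/(1+x) ≤ 2s²/(1+s²m²) ≤ 4s²/(1+sm)²`. The last expression is at most
`4s (1/(1+s(m-1)) - 1/(1+sm))`, which telescopes to a total of at most `4s`
(`series_term_le`). Hence `C = 4` works.
-/

lemma one_sub_exp_neg_sq_le {x : ℝ} (hx : 0 < x) :
    (1 - Real.exp (-x)) ^ 2 ≤ 2 * x / (1 + x) := by
  have h1 : 1 - Real.exp (-x) ≤ x := by linarith [Real.add_one_le_exp (-x)]
  have h2 : Real.exp (-x) ≤ 1 := Real.exp_le_one_iff.mpr (by linarith)
  have h3 := Real.exp_pos (-x)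
  rw [le_div_iff₀ (by linarith)]
  generalize Real.exp (-x) = e at *
  have h4 : (1 - e) ^ 2 ≤ 1 - e := by nlinarith
  have h5 : (1 - e) ^ 2 ≤ 1 := by linarith
  nlinarith

/-- Each term of the series is dominated by a telescoping difference. -/
lemma series_term_le {s : ℝ} (hs : 0 < s) (n : ℕ) :
    (1 - Real.exp (-(Real.pi ^ 2) * ((n : ℝ) + 1) ^ 2 * s ^ 2)) ^ 2
        / (Real.pi ^ 2 * ((n : ℝ) + 1) ^ 2)
      ≤ 4 * s * (1 / (1 + s * (n : ℝ)) - 1 / (1 + s * ((n + 1 : ℕ) : ℝ))) := by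
  have hn : (0 : ℝ) ≤ n := n.cast_nonneg
  push_cast
  generalize (n : ℝ) = t at *
  have hpi : 1 ≤ Real.pi ^ 2 := by nlinarith [Real.pi_gt_three]
  have hq : 0 < Real.pi ^ 2 * (t + 1) ^ 2 := by positivity
  have key := one_sub_exp_neg_sq_le (x := Real.pi ^ 2 * (t + 1) ^ 2 * s ^ 2) (by positivity)
  have hsn : 0 ≤ s * t := by positivity
  calc _ ≤ 2 * s ^ 2 / (1 + Real.pi ^ 2 * (t + 1) ^ 2 * s ^ 2) := by
        rw [div_le_iff₀ hq, neg_mul, neg_mul]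
        refine key.trans (le_of_eq ?_)
        ring
    _ ≤ 2 * s ^ 2 / (1 + (s * (t + 1)) ^ 2) := by
        gcongr
        nlinarith [mul_le_mul_of_nonneg_right hpi (sq_nonneg (s * (t + 1)))]
    _ ≤ 4 * s ^ 2 / ((1 + s * t) * (1 + s * (t + 1))) := by
        rw [div_le_div_iff₀ (by positivity) (by positivity)]
        -- `(1 + st)(1 + y) ≤ (1 + y)² ≤ 2(1 + y²)` with `y = s(t + 1)`
        have h6 : (1 + s * t) * (1 + s * (t + 1)) ≤ 2 * (1 + (s * (t + 1)) ^ 2) := by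
          nlinarith [sq_nonneg (s * (t + 1) - 1), mul_nonneg hs.le hsn]
        nlinarith [mul_le_mul_of_nonneg_left h6 (sq_nonneg s)]
    _ = _ := by
        have : 1 + s * t ≠ 0 := by positivity
        have : 1 + s * (t + 1) ≠ 0 := by positivity
        field_simp
        ring

/-- There is `C > 0` such that for every `h > 0`,
`∑_{n=1}^∞ (1 − e^{−π²n²h})²/(π²n²) ≤ C h^{1/2}`. -/
theorem exp_series_time_modulus :
    ∃ C : ℝ, 0 < C ∧ ∀ h : ℝ, 0 < h →
      (∑' n : ℕ, (1 - Real.exp (-(Real.pi ^ 2) * ((n : ℝ) + 1) ^ 2 * h)) ^ 2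
          / (Real.pi ^ 2 * ((n : ℝ) + 1) ^ 2))
        ≤ C * h ^ ((1 : ℝ) / 2) := by
  refine ⟨4, by norm_num, fun h hh => ?_⟩
  rw [← Real.sqrt_eq_rpow]
  obtain ⟨s, hs, rfl⟩ : ∃ s : ℝ, 0 < s ∧ s ^ 2 = h :=
    ⟨√h, Real.sqrt_pos.mpr hh, Real.sq_sqrt hh.le⟩
  rw [Real.sqrt_sq hs.le]
  refine Real.tsum_le_of_sum_range_le (fun n => by positivity) fun N => ?_
  refine (Finset.sum_le_sum fun n _ => series_term_le hs n).trans ?_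
  rw [← Finset.mul_sum, Finset.sum_range_sub' (fun n : ℕ => 1 / (1 + s * (n : ℝ)))]
  have h7 : 0 ≤ 1 / (1 + s * (N : ℝ)) := by positivity
  simp only [Nat.cast_zero, mul_zero, add_zero, div_one]
  nlinarith
end
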